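/- Let W be a set of expressions, T_α and T_β sets with ternary relations E_α and E_β, and h : T_α → T_β a map such that E_α A B C implies E_β (h A) (h B) (h C). For a language 𝓛 ⊆ W × T_α write h⋆𝓛 = {(w, h A) : (w,A) ∈ 𝓛} ⊆ W × T_β. Then: (i) the logical closure of h⋆(𝓛̄) equals the logical closure of h⋆𝓛, where 𝓛̄ is the logical closure of 𝓛; and consequently (ii) for all languages 𝓚, 𝓛 ⊆ W × T_α, the logical closure of h⋆(𝓚 ⊔ 𝓛) equals the logical join of the logical closures of h⋆𝓚 and h⋆𝓛, where ⊔ denotes logical join (logical closure of the union). -/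

import Mathlib

/-!
Pushforward along `h` is left adjoint to the preimage under `(w, A) ↦ (w, h A)`, and equivariance of
`h` makes this preimage send logically closed languages to logically closed languages. For any two
closure operators, a left adjoint whose right adjoint preserves closed elements sends `x` and its
closure to elements with the same closure; since left adjoints also preserve joins, both claims
follow.
-/

/-- A language `𝓛 ⊆ W × T` is logically closed w.r.t. `E` (Definition 3.4). -/
def LClosedLang {W T : Type*} (E : T → T → T → Prop) (L : Set (W × T)) : Prop :=
  ∀ (w : W) (A B C : T), (w, B) ∈ L → (w, C) ∈ L → E A B C → (w, A) ∈ L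

/-- Logical closure of a language. -/
def lclosureLang {W T : Type*} (E : T → T → T → Prop) (L : Set (W × T)) :
    Set (W × T) :=
  ⋂₀ {S : Set (W × T) | L ⊆ S ∧ LClosedLang E S}

/-- Pushforward of a language along a map on terms (a functional semantic rule,
Definition 3.11): `h⋆𝓛 = {(w, h A) : (w, A) ∈ 𝓛}`. -/
def mapTermLang {W Tα Tβ : Type*} (h : Tα → Tβ) (L : Set (W × Tα)) :
    Set (W × Tβ) :=
  (fun p : W × Tα => (p.1, h p.2)) '' L

section GaloisConnection

variable {α β : Type*} {l : α → β} {u : β → α}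

theorem closure_l_closure [Preorder α] [PartialOrder β] {c : ClosureOperator α}
    {d : ClosureOperator β} (gc : GaloisConnection l u)
    (hu : ∀ ⦃y⦄, d.IsClosed y → c.IsClosed (u y)) (x : α) : d (l (c x)) = d (l x) := by
  have l_closure_le : l (c x) ≤ d (l x) :=
    gc.l_le <| ClosureOperator.closure_min (gc.le_u (d.le_closure _)) (hu (d.isClosed_closure _))
  exact le_antisymm (ClosureOperator.le_closure_iff.1 l_closure_le)
    (d.monotone (gc.monotone_l (c.le_closure x)))

theorem closure_l_closure_sup [SemilatticeSup α] [SemilatticeSup β] {c : ClosureOperator α}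
    {d : ClosureOperator β} (gc : GaloisConnection l u)
    (hu : ∀ ⦃y⦄, d.IsClosed y → c.IsClosed (u y)) (x y : α) :
    d (l (c (x ⊔ y))) = d (d (l x) ⊔ d (l y)) := by
  rw [closure_l_closure gc hu, gc.l_sup, d.closure_sup_closure]

end GaloisConnection

section Language

variable {W T Tα Tβ : Type*}

theorem LClosedLang.sInter {E : T → T → T → Prop} {𝒮 : Set (Set (W × T))}
    (h𝒮 : ∀ S ∈ 𝒮, LClosedLang E S) : LClosedLang E (⋂₀ 𝒮) :=
  fun w A B C hB hC hE S hS => h𝒮 S hS w A B C (hB S hS) (hC S hS) hE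

theorem LClosedLang.preimage {Eα : Tα → Tα → Tα → Prop} {Eβ : Tβ → Tβ → Tβ → Prop} {h : Tα → Tβ}
    (hh : ∀ A B C : Tα, Eα A B C → Eβ (h A) (h B) (h C)) {S : Set (W × Tβ)}
    (hS : LClosedLang Eβ S) : LClosedLang Eα ((fun p : W × Tα => (p.1, h p.2)) ⁻¹' S) :=
  fun w A B C hB hC hE => hS w (h A) (h B) (h C) hB hC (hh A B C hE)

/-- Logical closure `lclosureLang E` as a closure operator on languages. It is built with `ofPred`
so that its values and its closed elements are definitionally `lclosureLang E L` and the languages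
satisfying `LClosedLang E`. -/
def lclosureOperator (W : Type*) {T : Type*} (E : T → T → T → Prop) :
    ClosureOperator (Set (W × T)) :=
  .ofPred (lclosureLang E) (LClosedLang E)
    (fun _ => Set.subset_sInter fun _ hS => hS.1)
    (fun _ => LClosedLang.sInter fun _ hS => hS.2)
    (fun _ _ hLS hS => Set.sInter_subset_of_mem ⟨hLS, hS⟩)

theorem gc_mapTermLang_preimage (h : Tα → Tβ) :
    GaloisConnection (mapTermLang (W := W) h) (Set.preimage fun p : W × Tα => (p.1, h p.2)) :=
  Set.image_preimage

end Language

/-- for `h` equivariant w.r.t. `E_α`, `E_β`: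
(i) the logical closure of `h⋆(𝓛̄)` equals the logical closure of `h⋆𝓛`;
(ii) the logical closure of `h⋆(𝓚 ⊔ 𝓛)` equals the logical join of the logical
closures of `h⋆𝓚` and `h⋆𝓛`. -/
theorem mapTermLang_lclosure {W Tα Tβ : Type*}
    (Eα : Tα → Tα → Tα → Prop) (Eβ : Tβ → Tβ → Tβ → Prop)
    (h : Tα → Tβ) (hh : ∀ A B C : Tα, Eα A B C → Eβ (h A) (h B) (h C)) :
    (∀ L : Set (W × Tα),
      lclosureLang Eβ (mapTermLang h (lclosureLang Eα L)) =
        lclosureLang Eβ (mapTermLang h L)) ∧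
    (∀ K L : Set (W × Tα),
      lclosureLang Eβ (mapTermLang h (lclosureLang Eα (K ∪ L))) =
        lclosureLang Eβ
          (lclosureLang Eβ (mapTermLang h K) ∪ lclosureLang Eβ (mapTermLang h L))) := by
  have gc := gc_mapTermLang_preimage (W := W) h
  have closed_preimage ⦃S : Set (W × Tβ)⦄ (hS : (lclosureOperator W Eβ).IsClosed S) :
      (lclosureOperator W Eα).IsClosed ((fun p : W × Tα => (p.1, h p.2)) ⁻¹' S) :=
    LClosedLang.preimage hh hS
  exact ⟨closure_l_closure gc closed_preimage, closure_l_closure_sup gc closed_preimage⟩
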